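/- There exists a unique ℂ-algebra homomorphism Δ_L : Γ → A ⊗ Γ satisfying Δ_L(x) = x ⊗ x, Δ_L(x⁻¹) = x⁻¹ ⊗ x⁻¹, Δ_L(y) = y ⊗ 1 + x ⊗ y, Δ_L(dx) = x ⊗ dx, and Δ_L(dy) = x ⊗ dy. (In particular these assignments preserve all the defining relations of Γ.) -/

import Mathlib

/-!
Since `Γ` is presented by generators and relations, an algebra map out of `Γ` is the same as a
choice of images of the five generators satisfying the defining relations. Uniqueness is then
immediate, and existence is the check `coactGen_rel`: expanding products in `A ⊗ Γ`, each relation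
follows from the same relation in the `Γ` factor together with the relations of `A`.
-/

open scoped TensorProduct
open MulOpposite

noncomputable section

/-- Relations for the extended quantum plane: `x*y = q•(y*x)`, `x*x⁻¹ = 1 = x⁻¹*x`.
Generators: `0 = x`, `1 = x⁻¹`, `2 = y`. -/
inductive ARel (q : ℂ) : FreeAlgebra ℂ (Fin 3) → FreeAlgebra ℂ (Fin 3) → Prop
  | xy : ARel q (FreeAlgebra.ι ℂ 0 * FreeAlgebra.ι ℂ 2) (q • (FreeAlgebra.ι ℂ 2 * FreeAlgebra.ι ℂ 0))
  | xxinv : ARel q (FreeAlgebra.ι ℂ 0 * FreeAlgebra.ι ℂ 1) 1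
  | xinvx : ARel q (FreeAlgebra.ι ℂ 1 * FreeAlgebra.ι ℂ 0) 1

/-- The (unital extension of the) quantum plane algebra `A`. -/
abbrev QA (q : ℂ) := RingQuot (ARel q)

/-- The generator `x` of `A`. -/
def aX (q : ℂ) : QA q := RingQuot.mkAlgHom ℂ (ARel q) (FreeAlgebra.ι ℂ 0)

/-- The generator `x⁻¹` of `A`. -/
def aXinv (q : ℂ) : QA q := RingQuot.mkAlgHom ℂ (ARel q) (FreeAlgebra.ι ℂ 1)

/-- The generator `y` of `A`. -/
def aY (q : ℂ) : QA q := RingQuot.mkAlgHom ℂ (ARel q) (FreeAlgebra.ι ℂ 2)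

/-- Relations for the differential algebra `Γ` of the extended quantum plane.
Generators: `0 = x`, `1 = x⁻¹`, `2 = y`, `3 = dx`, `4 = dy`. -/
inductive GRel (q : ℂ) : FreeAlgebra ℂ (Fin 5) → FreeAlgebra ℂ (Fin 5) → Prop
  | xy : GRel q (FreeAlgebra.ι ℂ 0 * FreeAlgebra.ι ℂ 2) (q • (FreeAlgebra.ι ℂ 2 * FreeAlgebra.ι ℂ 0))
  | xxinv : GRel q (FreeAlgebra.ι ℂ 0 * FreeAlgebra.ι ℂ 1) 1
  | xinvx : GRel q (FreeAlgebra.ι ℂ 1 * FreeAlgebra.ι ℂ 0) 1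
  | xdx : GRel q (FreeAlgebra.ι ℂ 0 * FreeAlgebra.ι ℂ 3) (q⁻¹ • (FreeAlgebra.ι ℂ 3 * FreeAlgebra.ι ℂ 0))
  | xdy : GRel q (FreeAlgebra.ι ℂ 0 * FreeAlgebra.ι ℂ 4) (FreeAlgebra.ι ℂ 4 * FreeAlgebra.ι ℂ 0)
  | ydx : GRel q (FreeAlgebra.ι ℂ 2 * FreeAlgebra.ι ℂ 3)
      (q⁻¹ • (FreeAlgebra.ι ℂ 3 * FreeAlgebra.ι ℂ 2) +
        (q⁻¹ - 1) • (FreeAlgebra.ι ℂ 4 * FreeAlgebra.ι ℂ 0))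
  | ydy : GRel q (FreeAlgebra.ι ℂ 2 * FreeAlgebra.ι ℂ 4) (q⁻¹ • (FreeAlgebra.ι ℂ 4 * FreeAlgebra.ι ℂ 2))
  | dxdx : GRel q (FreeAlgebra.ι ℂ 3 * FreeAlgebra.ι ℂ 3) 0
  | dxdy : GRel q (FreeAlgebra.ι ℂ 3 * FreeAlgebra.ι ℂ 4) (-(FreeAlgebra.ι ℂ 4 * FreeAlgebra.ι ℂ 3))
  | dydy : GRel q (FreeAlgebra.ι ℂ 4 * FreeAlgebra.ι ℂ 4) 0

/-- The differential algebra `Γ` of the extended quantum plane. -/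
abbrev QG (q : ℂ) := RingQuot (GRel q)

/-- The generator `x` of `Γ`. -/
def gX (q : ℂ) : QG q := RingQuot.mkAlgHom ℂ (GRel q) (FreeAlgebra.ι ℂ 0)

/-- The generator `x⁻¹` of `Γ`. -/
def gXinv (q : ℂ) : QG q := RingQuot.mkAlgHom ℂ (GRel q) (FreeAlgebra.ι ℂ 1)

/-- The generator `y` of `Γ`. -/
def gY (q : ℂ) : QG q := RingQuot.mkAlgHom ℂ (GRel q) (FreeAlgebra.ι ℂ 2)

/-- The generator `dx` of `Γ`. -/
def gDX (q : ℂ) : QG q := RingQuot.mkAlgHom ℂ (GRel q) (FreeAlgebra.ι ℂ 3)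

/-- The generator `dy` of `Γ`. -/
def gDY (q : ℂ) : QG q := RingQuot.mkAlgHom ℂ (GRel q) (FreeAlgebra.ι ℂ 4)

lemma aX_mul_aY (q : ℂ) : aX q * aY q = q • (aY q * aX q) := by
  simpa [aX, aY] using RingQuot.mkAlgHom_rel ℂ (ARel.xy (q := q))

lemma aX_mul_aXinv (q : ℂ) : aX q * aXinv q = 1 := by
  simpa [aX, aXinv] using RingQuot.mkAlgHom_rel ℂ (ARel.xxinv (q := q))

lemma aXinv_mul_aX (q : ℂ) : aXinv q * aX q = 1 := by
  simpa [aX, aXinv] using RingQuot.mkAlgHom_rel ℂ (ARel.xinvx (q := q))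

lemma gX_mul_gY (q : ℂ) : gX q * gY q = q • (gY q * gX q) := by
  simpa only [gX, gXinv, gY, gDX, gDY, map_mul, map_add, map_neg, map_smul, map_one, map_zero] using
    RingQuot.mkAlgHom_rel ℂ (GRel.xy (q := q))

lemma gX_mul_gXinv (q : ℂ) : gX q * gXinv q = 1 := by
  simpa only [gX, gXinv, gY, gDX, gDY, map_mul, map_add, map_neg, map_smul, map_one, map_zero] using
    RingQuot.mkAlgHom_rel ℂ (GRel.xxinv (q := q))

lemma gXinv_mul_gX (q : ℂ) : gXinv q * gX q = 1 := by
  simpa only [gX, gXinv, gY, gDX, gDY, map_mul, map_add, map_neg, map_smul, map_one, map_zero] using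
    RingQuot.mkAlgHom_rel ℂ (GRel.xinvx (q := q))

lemma gX_mul_gDX (q : ℂ) : gX q * gDX q = q⁻¹ • (gDX q * gX q) := by
  simpa only [gX, gXinv, gY, gDX, gDY, map_mul, map_add, map_neg, map_smul, map_one, map_zero] using
    RingQuot.mkAlgHom_rel ℂ (GRel.xdx (q := q))

lemma gX_mul_gDY (q : ℂ) : gX q * gDY q = gDY q * gX q := by
  simpa only [gX, gXinv, gY, gDX, gDY, map_mul, map_add, map_neg, map_smul, map_one, map_zero] using
    RingQuot.mkAlgHom_rel ℂ (GRel.xdy (q := q))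

lemma gY_mul_gDX (q : ℂ) : gY q * gDX q = q⁻¹ • (gDX q * gY q) + (q⁻¹ - 1) • (gDY q * gX q) := by
  simpa only [gX, gXinv, gY, gDX, gDY, map_mul, map_add, map_neg, map_smul, map_one, map_zero] using
    RingQuot.mkAlgHom_rel ℂ (GRel.ydx (q := q))

lemma gY_mul_gDY (q : ℂ) : gY q * gDY q = q⁻¹ • (gDY q * gY q) := by
  simpa only [gX, gXinv, gY, gDX, gDY, map_mul, map_add, map_neg, map_smul, map_one, map_zero] using
    RingQuot.mkAlgHom_rel ℂ (GRel.ydy (q := q))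

lemma gDX_mul_gDX (q : ℂ) : gDX q * gDX q = 0 := by
  simpa only [gX, gXinv, gY, gDX, gDY, map_mul, map_add, map_neg, map_smul, map_one, map_zero] using
    RingQuot.mkAlgHom_rel ℂ (GRel.dxdx (q := q))

lemma gDX_mul_gDY (q : ℂ) : gDX q * gDY q = -(gDY q * gDX q) := by
  simpa only [gX, gXinv, gY, gDX, gDY, map_mul, map_add, map_neg, map_smul, map_one, map_zero] using
    RingQuot.mkAlgHom_rel ℂ (GRel.dxdy (q := q))

lemma gDY_mul_gDY (q : ℂ) : gDY q * gDY q = 0 := by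
  simpa only [gX, gXinv, gY, gDX, gDY, map_mul, map_add, map_neg, map_smul, map_one, map_zero] using
    RingQuot.mkAlgHom_rel ℂ (GRel.dydy (q := q))

/-- The prescribed images in `A ⊗ Γ` of the five generators of `Γ`. -/
def coactGen (q : ℂ) : Fin 5 → QA q ⊗[ℂ] QG q :=
  ![aX q ⊗ₜ[ℂ] gX q, aXinv q ⊗ₜ[ℂ] gXinv q, aY q ⊗ₜ[ℂ] 1 + aX q ⊗ₜ[ℂ] gY q,
    aX q ⊗ₜ[ℂ] gDX q, aX q ⊗ₜ[ℂ] gDY q]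

/-- The prescribed images satisfy the defining relations of `Γ`. In the relations for `y dx` and
`y dy`, the cross term `yx ⊗ ω` is matched with `q⁻¹ xy ⊗ ω` using `xy = q yx` in `A`; this is
where `q ≠ 0` enters. -/
lemma coactGen_rel (q : ℂ) (hq : q ≠ 0) ⦃a b : FreeAlgebra ℂ (Fin 5)⦄ (h : GRel q a b) :
    FreeAlgebra.lift ℂ (coactGen q) a = FreeAlgebra.lift ℂ (coactGen q) b := by
  have hA : aY q * aX q = q⁻¹ • (aX q * aY q) := by
    rw [aX_mul_aY, smul_smul, inv_mul_cancel₀ hq, one_smul]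
  cases h <;>
    simp only [map_mul, map_add, map_neg, map_smul, map_one, map_zero, FreeAlgebra.lift_ι_apply,
      coactGen, Matrix.cons_val, mul_add, add_mul, smul_add,
      Algebra.TensorProduct.tmul_mul_tmul, mul_one, one_mul]
  case xy =>
    rw [aX_mul_aY, gX_mul_gY, TensorProduct.smul_tmul', TensorProduct.tmul_smul]
  case xxinv => rw [aX_mul_aXinv, gX_mul_gXinv, Algebra.TensorProduct.one_def]
  case xinvx => rw [aXinv_mul_aX, gXinv_mul_gX, Algebra.TensorProduct.one_def]
  case xdx => rw [gX_mul_gDX, TensorProduct.tmul_smul]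
  case xdy => rw [gX_mul_gDY]
  case ydx =>
    rw [hA, gY_mul_gDX, TensorProduct.smul_tmul', TensorProduct.tmul_add,
      TensorProduct.tmul_smul, TensorProduct.tmul_smul, add_assoc]
  case ydy => rw [hA, gY_mul_gDY, TensorProduct.smul_tmul', TensorProduct.tmul_smul]
  case dxdx => rw [gDX_mul_gDX, TensorProduct.tmul_zero]
  case dxdy => rw [gDX_mul_gDY, TensorProduct.tmul_neg]
  case dydy => rw [gDY_mul_gDY, TensorProduct.tmul_zero]

/-- There exists a unique ℂ-algebra homomorphism `Δ_L : Γ → A ⊗ Γ` with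
`Δ_L(x) = x ⊗ x`, `Δ_L(x⁻¹) = x⁻¹ ⊗ x⁻¹`, `Δ_L(y) = y ⊗ 1 + x ⊗ y`,
`Δ_L(dx) = x ⊗ dx`, `Δ_L(dy) = x ⊗ dy`. -/
theorem left_coaction_exists_unique (q : ℂ) (hq : q ≠ 0) :
    ∃! ΔL : QG q →ₐ[ℂ] QA q ⊗[ℂ] QG q,
      ΔL (gX q) = aX q ⊗ₜ[ℂ] gX q ∧
      ΔL (gXinv q) = aXinv q ⊗ₜ[ℂ] gXinv q ∧
      ΔL (gY q) = aY q ⊗ₜ[ℂ] 1 + aX q ⊗ₜ[ℂ] gY q ∧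
      ΔL (gDX q) = aX q ⊗ₜ[ℂ] gDX q ∧
      ΔL (gDY q) = aX q ⊗ₜ[ℂ] gDY q := by
  have hgen (i : Fin 5) : RingQuot.liftAlgHom ℂ
      ⟨FreeAlgebra.lift ℂ (coactGen q), coactGen_rel q hq⟩
      (RingQuot.mkAlgHom ℂ (GRel q) (FreeAlgebra.ι ℂ i)) = coactGen q i := by
    rw [RingQuot.liftAlgHom_mkAlgHom_apply, FreeAlgebra.lift_ι_apply]
  refine ⟨RingQuot.liftAlgHom ℂ ⟨FreeAlgebra.lift ℂ (coactGen q), coactGen_rel q hq⟩,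
    ⟨hgen 0, hgen 1, hgen 2, hgen 3, hgen 4⟩, ?_⟩
  rintro f ⟨h0, h1, h2, h3, h4⟩
  -- Two algebra maps out of `Γ` agree once they agree on the five generators.
  apply RingQuot.ringQuot_ext'
  apply FreeAlgebra.hom_ext
  funext i
  refine Eq.trans ?_ (hgen i).symm
  fin_cases i
  exacts [h0, h1, h2, h3, h4]
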